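/- arXiv:2507.10417 — 2 statements merged into one kernel-verified Lean document; each statement's English description precedes it below -/
import Mathlib

section
/- Let F be a field, let k ≤ n be positive integers with n ≥ 1, and let G₀ ∈ F^{k×n} be any matrix. Then the minor product polynomial P(X) ∈ F[x_{1,1},…,x_{k,n−k}] of G₀ is homogeneous of degree d(n,k). -/
/-! Every minor `P_{I,J}` is homogeneous of degree `|J| - k`: in the Leibniz expansion a term
vanishes unless the `k` lower rows are all matched with columns of `J`, because the lower left block
is zero. The remaining `|J| - k` columns of `J` are then matched with upper rows, where the entries
of `G₁` are linear forms or zero, and every other entry is a constant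
(`isHomogeneous_minorOfCols`). The degree of the product is therefore the sum of `|J| - k` over all
pairs, and grouping the pairs by the cardinalities of `I` and `J` gives `d(n,k)`
(`sum_mdpPairs`). -/

open Matrix MvPolynomial

/-- The sliding generator matrix `G₁ᶜ = [[G₀, G₁],[0, G₀]]`. -/
def slidingMat {R : Type*} [Semiring R] {k n : ℕ}
    (G0 G1 : Matrix (Fin k) (Fin n) R) : Matrix (Fin (k + k)) (Fin (n + n)) R :=
  Matrix.reindex finSumFinEquiv finSumFinEquiv (Matrix.fromBlocks G0 G1 0 G0)

/-- The (full-size) minor of `M` given by selecting the columns in `S`. -/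
noncomputable def minorOfCols {R : Type*} [CommRing R] {K N : ℕ}
    (M : Matrix (Fin K) (Fin N) R) (S : Finset (Fin N)) : R :=
  if h : S.card = K then (M.submatrix id fun i => (S.orderIsoOfFin h i).1).det
  else 1

/-- The matrix `G₁ = (X | 0)` where `X` is a `k × (n-k)` matrix of indeterminates. -/
noncomputable def varMatrixG1 (F : Type*) [Field F] (k n : ℕ) :
    Matrix (Fin k) (Fin n) (MvPolynomial (Fin k × Fin (n - k)) F) :=
  fun r c => if h : (c : ℕ) < n - k then MvPolynomial.X (r, ⟨(c : ℕ), h⟩) else 0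

open scoped Classical in
/-- Pairs `(I, J)` of column index sets with `I ⊆ {1,…,n}`, `J ⊆ {n+1,…,2n}`,
`|I| ≤ k ≤ |J|` and `|I| + |J| = 2k`. -/
noncomputable def mdpPairs (n k : ℕ) :
    Finset (Finset (Fin (n + n)) × Finset (Fin (n + n))) :=
  Finset.univ.filter fun p =>
    (∀ x ∈ p.1, (x : ℕ) < n) ∧ (∀ x ∈ p.2, n ≤ (x : ℕ)) ∧
      p.1.card ≤ k ∧ k ≤ p.2.card ∧ p.1.card + p.2.card = k + k

/-- The minor product polynomial `P(X) = ∏_{(I,J)} P_{I,J}(X)` of `G₀`. -/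
noncomputable def minorProductPoly {F : Type*} [Field F] {k n : ℕ}
    (G0 : Matrix (Fin k) (Fin n) F) : MvPolynomial (Fin k × Fin (n - k)) F :=
  ∏ p ∈ mdpPairs n k,
    minorOfCols (slidingMat (G0.map MvPolynomial.C) (varMatrixG1 F k n)) (p.1 ∪ p.2)

/-- `d(n,k) = Σ_{0≤i≤k, k≤j≤n, i+j=2k} C(n,i)·C(n,j)·(j−k)`. -/
def dTotal (n k : ℕ) : ℕ :=
  ∑ i ∈ Finset.range (k + 1), ∑ j ∈ Finset.range (n + 1),
    if k ≤ j ∧ i + j = 2 * k then n.choose i * n.choose j * (j - k) else 0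

/-- An upper entry of the sliding matrix has degree one in the right half; every other entry is
constant. -/
lemma isHomogeneous_slidingMat {F : Type*} [Field F] {k n : ℕ}
    (G0 : Matrix (Fin k) (Fin n) F) (r : Fin (k + k)) (c : Fin (n + n)) :
    (slidingMat (G0.map MvPolynomial.C) (varMatrixG1 F k n) r c).IsHomogeneous
      (if (r : ℕ) < k ∧ n ≤ (c : ℕ) then 1 else 0) := by
  obtain ⟨r, rfl⟩ := finSumFinEquiv.surjective r
  obtain ⟨c, rfl⟩ := finSumFinEquiv.surjective c
  rcases r with r | r <;> rcases c with c | c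
  · have hc : ¬ n ≤ ((finSumFinEquiv (Sum.inl c) : Fin (n + n)) : ℕ) := by simp
    rw [if_neg (fun h => hc h.2)]
    simpa only [slidingMat, reindex_apply, submatrix_apply, Equiv.symm_apply_apply,
      fromBlocks_apply₁₁, Matrix.map_apply] using isHomogeneous_C _ (G0 r c)
  · have hr := r.2
    simp only [slidingMat, reindex_apply, submatrix_apply, Equiv.symm_apply_apply,
      fromBlocks_apply₁₂, varMatrixG1]
    simp only [finSumFinEquiv_apply_left, finSumFinEquiv_apply_right, Fin.val_castAdd,
      Fin.val_natAdd, hr, Nat.le_add_right, and_self, if_true]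
    split_ifs
    · exact isHomogeneous_X _ _
    · exact isHomogeneous_zero _ _ _
  · simpa only [slidingMat, reindex_apply, submatrix_apply, Equiv.symm_apply_apply,
      fromBlocks_apply₂₁, Matrix.zero_apply] using isHomogeneous_zero _ _ _
  · have hr : ¬ ((finSumFinEquiv (Sum.inr r) : Fin (k + k)) : ℕ) < k := by simp
    rw [if_neg (fun h => hr h.1)]
    simpa only [slidingMat, reindex_apply, submatrix_apply, Equiv.symm_apply_apply,
      fromBlocks_apply₂₂, Matrix.map_apply] using isHomogeneous_C _ (G0 r c)

lemma slidingMat_lower_left {R : Type*} [Semiring R] {k n : ℕ}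
    (G0 G1 : Matrix (Fin k) (Fin n) R) (r : Fin (k + k)) (c : Fin (n + n))
    (hr : k ≤ (r : ℕ)) (hc : (c : ℕ) < n) : slidingMat G0 G1 r c = 0 := by
  obtain ⟨r, rfl⟩ := finSumFinEquiv.surjective r
  obtain ⟨c, rfl⟩ := finSumFinEquiv.surjective c
  rcases r with r | r <;> rcases c with c | c
  · simp at hr; omega
  · simp at hc
  · simp only [slidingMat, reindex_apply, submatrix_apply, Equiv.symm_apply_apply,
      fromBlocks_apply₂₁, Matrix.zero_apply]
  · simp at hc

/-- If `S` has fewer than `k` columns in the right half, every Leibniz term vanishes, so the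
truncated subtraction does no harm. -/
lemma isHomogeneous_minorOfCols {F : Type*} [Field F] {k n : ℕ}
    (G0 : Matrix (Fin k) (Fin n) F) (S : Finset (Fin (n + n))) (hS : S.card = k + k) :
    (minorOfCols (slidingMat (G0.map MvPolynomial.C) (varMatrixG1 F k n)) S).IsHomogeneous
      ((S.filter fun x : Fin (n + n) => n ≤ (x : ℕ)).card - k) := by
  rw [minorOfCols, dif_pos hS, det_apply]
  refine IsHomogeneous.sum _ _ _ fun σ _ => ?_
  set e := S.orderIsoOfFin hS with he
  set M := slidingMat (G0.map MvPolynomial.C) (varMatrixG1 F k n) with hM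
  have key : (∏ i, M.submatrix id (fun i => (e i).1) (σ i) i).IsHomogeneous
      ((S.filter fun x : Fin (n + n) => n ≤ (x : ℕ)).card - k) := by
    by_cases h : ∃ i, k ≤ (σ i : ℕ) ∧ ((e i).1 : ℕ) < n
    · obtain ⟨i, h1, h2⟩ := h
      rw [Finset.prod_eq_zero (Finset.mem_univ i)
        (by simpa using slidingMat_lower_left _ _ _ _ h1 h2)]
      exact isHomogeneous_zero _ _ _
    · push Not at h
      have hp := IsHomogeneous.prod Finset.univ
        (fun i => M.submatrix id (fun i => (e i).1) (σ i) i) _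
        (fun i _ => isHomogeneous_slidingMat G0 (σ i) (e i).1)
      convert hp using 1
      -- A column of the right half is matched with exactly one of an upper or a lower row.
      have h1 : (∑ i, if (σ i : ℕ) < k ∧ n ≤ ((e i).1 : ℕ) then 1 else 0)
          + (∑ i, if k ≤ (σ i : ℕ) then 1 else 0)
          = ∑ i, if n ≤ ((e i).1 : ℕ) then 1 else 0 := by
        rw [← Finset.sum_add_distrib]
        refine Finset.sum_congr rfl fun i _ => ?_
        have := h i
        split_ifs <;> omega
      have h2 : (∑ i, if k ≤ (σ i : ℕ) then 1 else 0) = k := by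
        rw [Equiv.sum_comp σ (fun j : Fin (k + k) => if k ≤ (j : ℕ) then 1 else 0),
          Fin.sum_univ_add]
        simp [Nat.not_le.mpr (Fin.is_lt _)]
      have h3 : (∑ i, if n ≤ ((e i).1 : ℕ) then 1 else 0)
          = (S.filter fun x : Fin (n + n) => n ≤ (x : ℕ)).card := by
        refine (Equiv.sum_comp e.toEquiv (fun x : S => if n ≤ (x.1 : ℕ) then 1 else 0)).trans ?_
        rw [Finset.sum_coe_sort S (fun x => if n ≤ (x : ℕ) then 1 else 0), Finset.card_filter]
      omega
  -- The sign of the permutation does not affect homogeneity.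
  rcases Int.units_eq_one_or (Equiv.Perm.sign σ) with hσ | hσ
  · rw [hσ, one_smul]; exact key
  · rw [hσ, Units.neg_smul, one_smul]; exact key.neg

lemma sum_mdpPairs (n k : ℕ) (hkn : k ≤ n) :
    ∑ p ∈ mdpPairs n k, (p.2.card - k) = dTotal n k := by
  classical
  set A := Finset.univ.filter fun x : Fin (n + n) => (x : ℕ) < n with hA
  set B := Finset.univ.filter fun x : Fin (n + n) => n ≤ (x : ℕ) with hB
  have cA : A.card = n := by
    rw [hA, Finset.card_filter, Fin.sum_univ_add]
    simp
  have cB : B.card = n := by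
    rw [hB, Finset.card_filter, Fin.sum_univ_add]
    simp [Nat.not_le.mpr (Fin.is_lt _)]
  have h : mdpPairs n k = (A.powerset ×ˢ B.powerset).filter fun p =>
      p.1.card ≤ k ∧ k ≤ p.2.card ∧ p.1.card + p.2.card = k + k := by
    ext p
    simp [mdpPairs, hA, hB, Finset.subset_iff, and_assoc]
  rw [h, Finset.sum_filter, Finset.sum_product]
  simp only
  have inner (I : Finset (Fin (n + n))) :=
    Finset.sum_powerset_apply_card (x := B)
      (fun j => if I.card ≤ k ∧ k ≤ j ∧ I.card + j = k + k then j - k else 0)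
  have outer := Finset.sum_powerset_apply_card (x := A)
    (fun i => ∑ j ∈ Finset.range (B.card + 1),
      B.card.choose j • (if i ≤ k ∧ k ≤ j ∧ i + j = k + k then j - k else 0))
  rw [Finset.sum_congr rfl fun I _ => inner I, outer, cA, cB, dTotal]
  symm
  refine Finset.sum_subset_zero_on_sdiff
    (Finset.range_subset_range.2 (by omega)) (fun i hi => ?_) (fun i hi => ?_)
  · have hi' : ¬ i ≤ k := by simp at hi; omega
    simp [hi']
  · have hi' : i ≤ k := by simp at hi; omega
    rw [Finset.smul_sum]
    refine Finset.sum_congr rfl fun j _ => ?_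
    simp [hi', ← two_mul, mul_assoc]

theorem stmt3 {F : Type*} [Field F] {k n : ℕ} (hk : 0 < k) (hkn : k ≤ n)
    (G0 : Matrix (Fin k) (Fin n) F) :
    MvPolynomial.IsHomogeneous (minorProductPoly G0) (dTotal n k) := by
  classical
  rw [← sum_mdpPairs n k hkn]
  refine IsHomogeneous.prod _ _ _ fun p hp => ?_
  simp only [mdpPairs, Finset.mem_filter, Finset.mem_univ, true_and] at hp
  obtain ⟨h1, h2, -, -, h5⟩ := hp
  have hd : Disjoint p.1 p.2 := Finset.disjoint_left.2 fun x hx hx' =>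
    absurd (h1 x hx) (h2 x hx').not_gt
  have hJ : (p.1 ∪ p.2).filter (fun x : Fin (n + n) => n ≤ (x : ℕ)) = p.2 := by
    ext x
    simp only [Finset.mem_filter, Finset.mem_union]
    constructor
    · rintro ⟨hx | hx, hn⟩
      · exact absurd (h1 x hx) hn.not_gt
      · exact hx
    · exact fun hx => ⟨Or.inr hx, h2 x hx⟩
  have := isHomogeneous_minorOfCols G0 (p.1 ∪ p.2) ((Finset.card_union_of_disjoint hd).trans h5)
  rw [hJ] at this
  convert this
end

section
/- Let n and k be positive integers with k > n − k ≥ 1, let F be a finite field with more than d'(n,k) elements, and let G₀ ∈ F^{k×n} be a matrix with the MDS property that is in standard form, i.e., G₀ = (I_k | A) for some A ∈ F^{k×(n−k)}. Then there exists a matrix X ∈ F^{k×(n−k)} such that, setting G₁ = (X | 0_{k×k}) ∈ F^{k×n}, every nontrivial full-size minor of G₁ᶜ = [[G₀, G₁],[0, G₀]] is nonzero. -/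
/-!
Every nontrivial minor with `|I| = k` is nonzero for any `X`, because the corresponding submatrix
of `[[G₀, G₁], [0, G₀]]` is block triangular with invertible diagonal blocks. The remaining
minors, `|I| < k`, are viewed as polynomials in the entries of a generic `X`, and the product of
all of them is shown to have a nonvanishing point, by the following two facts.

*Each minor is a nonzero polynomial* (`exists_padRight_minor_ne_zero`). A vector `(a, b)` supported
on `I ∪ J` is killed iff `G₀ b = 0` and `G₀ a + X (ρ b) = 0`, where `ρ` keeps the first `n - k`
coordinates. By the MDS property any `k` columns of `G₀` are independent. So `ρ` is injective on
`ker G₀`, the space `K` of vectors of `ker G₀` supported on `J` has dimension at most `|J| - k`,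
and the columns of `G₀` in `I` span a space `W` of dimension at most `|I|`. As
`|I| + |J| = 2k`, there is room for `X` to embed `ρ K` into a complement of `W`, which forces
`a = 0` and `b = 0`.

*The product has degree at most `d'(n,k)` in each variable* (`degreeOf_genericMinor_le`,
`card_pairs_le`). The variable `x_{r,c}` occurs in a single entry, so each minor has degree at
most one in it. It does not occur unless column `c` is in `J`. Since `G₀` is in standard form,
column `r` of the sliding matrix is the `r`-th unit vector, so a minor with `r ∈ I` can be expanded
along this column and does not involve row `r`. The number of pairs with `r ∉ I` and `c ∈ J` is
at most `d'(n,k)`.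

As `|F| > d'(n,k)`, a nonzero polynomial with these degrees has a nonzero value on `F`.
-/

open Matrix

/-- A `k × n` matrix has the MDS property if every `k × k` minor is nonzero. -/
def HasMDSProperty {F : Type*} [Field F] {k n : ℕ} (G : Matrix (Fin k) (Fin n) F) : Prop :=
  ∀ S : Finset (Fin n), S.card = k → minorOfCols G S ≠ 0

/-- The matrix `G₁ = (X | 0_{k×k})` built from a `k × (n-k)` matrix `X`. -/
def padRight {F : Type*} [Zero F] {k n : ℕ} (X : Matrix (Fin k) (Fin (n - k)) F) :
    Matrix (Fin k) (Fin n) F :=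
  fun r c => if h : (c : ℕ) < n - k then X r ⟨(c : ℕ), h⟩ else 0

/-- All nontrivial full-size minors of the sliding matrix `G₁ᶜ` are nonzero:
for all column index sets `I ⊆ {1,…,n}`, `J ⊆ {n+1,…,2n}` with `|I| ≤ k` and
`|I| + |J| = 2k`, the corresponding `2k × 2k` minor of `G₁ᶜ` is nonzero. -/
def NontrivialMinorsNonzero {F : Type*} [Field F] {k n : ℕ}
    (G0 G1 : Matrix (Fin k) (Fin n) F) : Prop :=
  ∀ I J : Finset (Fin (n + n)),
    (∀ x ∈ I, (x : ℕ) < n) → (∀ x ∈ J, n ≤ (x : ℕ)) →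
    I.card ≤ k → I.card + J.card = k + k →
    minorOfCols (slidingMat G0 G1) (I ∪ J) ≠ 0

/-- `d'(n,k) = Σ_{0≤i≤k−1, k+1≤j≤n, i+j=2k} C(n−1,i)·C(n−1,j−1)`. -/
def dPrime (n k : ℕ) : ℕ :=
  ∑ i ∈ Finset.range k, ∑ j ∈ Finset.range (n + 1),
    if k + 1 ≤ j ∧ i + j = 2 * k then (n - 1).choose i * (n - 1).choose (j - 1) else 0

/-! ### Minors and independence of columns -/

lemma sum_eq_sum_orderIso {R : Type*} [CommRing R] {K N : ℕ} (S : Finset (Fin N))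
    (h : S.card = K) (f : Fin N → R) (hf : ∀ c, c ∉ S → f c = 0) :
    ∑ c, f c = ∑ i, f (S.orderIsoOfFin h i).1 := by
  rw [← Finset.sum_subset (Finset.subset_univ S) (fun c _ hc => hf c hc),
    ← Finset.sum_coe_sort S f]
  exact (Equiv.sum_comp (S.orderIsoOfFin h).toEquiv (fun x : S => f x.1)).symm

lemma minorOfCols_ne_zero_of {F : Type*} [Field F] {K N : ℕ} (M : Matrix (Fin K) (Fin N) F)
    (S : Finset (Fin N))
    (hinj : ∀ u : Fin N → F, (∀ c, c ∉ S → u c = 0) → M *ᵥ u = 0 → u = 0) :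
    minorOfCols M S ≠ 0 := by
  unfold minorOfCols
  split_ifs with h
  · intro hdet
    obtain ⟨w, hw0, hw⟩ := Matrix.exists_mulVec_eq_zero_iff.mpr hdet
    apply hw0
    set u : Fin N → F := fun c => if hc : c ∈ S then w ((S.orderIsoOfFin h).symm ⟨c, hc⟩) else 0
      with hu
    have hue : ∀ i, u (S.orderIsoOfFin h i).1 = w i := by
      intro i
      simp only [hu]
      rw [dif_pos (S.orderIsoOfFin h i).2, Subtype.coe_eta, OrderIso.symm_apply_apply]
    have hus : ∀ c, c ∉ S → u c = 0 := fun c hc => by simp [hu, hc]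
    have hu0 : u = 0 := by
      apply hinj u hus
      ext r
      have := congrFun hw r
      simp only [Matrix.mulVec, dotProduct, Matrix.submatrix_apply, id] at this ⊢
      rw [sum_eq_sum_orderIso S h _ (fun c hc => by rw [hus c hc, mul_zero])]
      simpa only [hue] using this
    ext i
    rw [← hue i, hu0]
    rfl
  · exact one_ne_zero

lemma eq_zero_of_minorOfCols_ne_zero {F : Type*} [Field F] {K N : ℕ}
    (M : Matrix (Fin K) (Fin N) F) (S : Finset (Fin N)) (h : S.card = K)
    (hne : minorOfCols M S ≠ 0) (u : Fin N → F) (hus : ∀ c, c ∉ S → u c = 0)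
    (hu : M *ᵥ u = 0) : u = 0 := by
  unfold minorOfCols at hne
  rw [dif_pos h] at hne
  have hw : (fun i => u (S.orderIsoOfFin h i).1) = 0 := by
    by_contra hw0
    apply hne
    refine Matrix.exists_mulVec_eq_zero_iff.mp ⟨_, hw0, ?_⟩
    ext r
    have := congrFun hu r
    simp only [Matrix.mulVec, dotProduct, Matrix.submatrix_apply, id] at this ⊢
    rwa [sum_eq_sum_orderIso S h _ (fun c hc => by rw [hus c hc, mul_zero])] at this
  ext c
  by_cases hc : c ∈ S
  · have := congrFun hw ((S.orderIsoOfFin h).symm ⟨c, hc⟩)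
    simpa using this
  · exact hus c hc

/-- Any at most `k` columns of an MDS matrix are linearly independent. -/
lemma HasMDSProperty.eq_zero {F : Type*} [Field F] {k n : ℕ} {G : Matrix (Fin k) (Fin n) F}
    (hG : HasMDSProperty G) (hkn : k ≤ n) (T : Finset (Fin n)) (hT : T.card ≤ k)
    (u : Fin n → F) (hus : ∀ c, c ∉ T → u c = 0) (hu : G *ᵥ u = 0) : u = 0 := by
  obtain ⟨S, hTS, -, hS⟩ := Finset.exists_subsuperset_card_eq (Finset.subset_univ T) hT
    (by simpa using hkn)
  exact eq_zero_of_minorOfCols_ne_zero G S hS (hG S hS) u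
    (fun c hc => hus c (fun h => hc (hTS h))) hu

lemma map_minorOfCols {R R' : Type*} [CommRing R] [CommRing R'] (f : R →+* R') {K N : ℕ}
    (M : Matrix (Fin K) (Fin N) R) (S : Finset (Fin N)) :
    f (minorOfCols M S) = minorOfCols (M.map f) S := by
  unfold minorOfCols
  split_ifs
  · rw [RingHom.map_det]
    rfl
  · exact map_one f

/-! ### The sliding matrix -/

section Sliding

variable {R : Type*} [Semiring R] {k n : ℕ} (G0 G1 : Matrix (Fin k) (Fin n) R)

@[simp] lemma slidingMat_castAdd_castAdd (r : Fin k) (c : Fin n) :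
    slidingMat G0 G1 (Fin.castAdd k r) (Fin.castAdd n c) = G0 r c := by
  simp [slidingMat, -Fin.natAdd_eq_addNat]

@[simp] lemma slidingMat_castAdd_natAdd (r : Fin k) (c : Fin n) :
    slidingMat G0 G1 (Fin.castAdd k r) (Fin.natAdd n c) = G1 r c := by
  simp [slidingMat, -Fin.natAdd_eq_addNat]

@[simp] lemma slidingMat_natAdd_castAdd (r : Fin k) (c : Fin n) :
    slidingMat G0 G1 (Fin.natAdd k r) (Fin.castAdd n c) = 0 := by
  simp [slidingMat, -Fin.natAdd_eq_addNat]

@[simp] lemma slidingMat_natAdd_natAdd (r : Fin k) (c : Fin n) :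
    slidingMat G0 G1 (Fin.natAdd k r) (Fin.natAdd n c) = G0 r c := by
  simp [slidingMat, -Fin.natAdd_eq_addNat]

end Sliding

/-- The set of columns of the sliding matrix given by `I` in the first block column and `J` in
the second one, both numbered from `0` to `n - 1`. -/
def colSet {n : ℕ} (I J : Finset (Fin n)) : Finset (Fin (n + n)) :=
  I.map (Fin.castAddEmb n) ∪ J.map (Fin.natAddEmb n)

@[simp] lemma castAdd_mem_colSet {n : ℕ} (I J : Finset (Fin n)) (c : Fin n) :
    Fin.castAdd n c ∈ colSet I J ↔ c ∈ I := by
  have h : ∀ a : Fin n, Fin.natAdd n a ≠ Fin.castAdd n c := fun a h => by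
    have := congrArg Fin.val h
    simp at this
    omega
  simp [colSet, h, -Fin.natAdd_eq_addNat]

@[simp] lemma natAdd_mem_colSet {n : ℕ} (I J : Finset (Fin n)) (c : Fin n) :
    Fin.natAdd n c ∈ colSet I J ↔ c ∈ J := by
  have h : ∀ a : Fin n, Fin.castAdd n a ≠ Fin.natAdd n c := fun a h => by
    have := congrArg Fin.val h
    simp at this
    omega
  simp [colSet, h, -Fin.natAdd_eq_addNat]

lemma slidingMat_minor_ne_zero_of {F : Type*} [Field F] {k n : ℕ}
    (G0 G1 : Matrix (Fin k) (Fin n) F) (I J : Finset (Fin n))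
    (h : ∀ a b : Fin n → F, (∀ c, c ∉ I → a c = 0) → (∀ c, c ∉ J → b c = 0) →
      G0 *ᵥ b = 0 → G0 *ᵥ a + G1 *ᵥ b = 0 → a = 0 ∧ b = 0) :
    minorOfCols (slidingMat G0 G1) (colSet I J) ≠ 0 := by
  apply minorOfCols_ne_zero_of
  intro u hus hu
  obtain ⟨ha, hb⟩ := h (fun c => u (Fin.castAdd n c)) (fun c => u (Fin.natAdd n c))
    (fun c hc => hus _ (by simpa [-Fin.natAdd_eq_addNat] using hc)) (fun c hc => hus _ (by simpa [-Fin.natAdd_eq_addNat] using hc))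
    (by
      ext r
      have := congrFun hu (Fin.natAdd k r)
      simpa [Matrix.mulVec, dotProduct, Fin.sum_univ_add, -Fin.natAdd_eq_addNat] using this)
    (by
      ext r
      have := congrFun hu (Fin.castAdd k r)
      simpa [Matrix.mulVec, dotProduct, Fin.sum_univ_add, -Fin.natAdd_eq_addNat] using this)
  ext c
  refine Fin.addCases (fun c => ?_) (fun c => ?_) c
  · exact congrFun ha c
  · exact congrFun hb c

lemma padRight_mulVec {F : Type*} [Field F] {k n : ℕ} (X : Matrix (Fin k) (Fin (n - k)) F)
    (b : Fin n → F) :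
    padRight X *ᵥ b = X *ᵥ fun c => b (Fin.castLE (Nat.sub_le n k) c) := by
  ext r
  simp only [Matrix.mulVec, dotProduct]
  refine (Finset.sum_of_injOn (Fin.castLE (Nat.sub_le n k))
    (Fin.castLE_injective _).injOn (fun _ _ => by simp) ?_ ?_).symm
  · intro c _ hc
    have : ¬ (c : ℕ) < n - k := fun h => hc ⟨⟨c, h⟩, by simp, by ext; simp⟩
    simp [padRight, this]
  · intro c _
    simp [padRight]

/-! ### Nonvanishing of each minor at some point -/

/-- The block-triangular case: with `k` columns in the first block column, the minor is nonzero
whatever `G₁` is. -/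
lemma slidingMat_minor_ne_zero_of_card_eq {F : Type*} [Field F] {k n : ℕ} (hkn : k ≤ n)
    {G0 : Matrix (Fin k) (Fin n) F} (hG : HasMDSProperty G0) (G1 : Matrix (Fin k) (Fin n) F)
    (I J : Finset (Fin n)) (hI : I.card = k) (hJ : J.card = k) :
    minorOfCols (slidingMat G0 G1) (colSet I J) ≠ 0 := by
  apply slidingMat_minor_ne_zero_of
  intro a b ha hb h1 h2
  have hb0 := hG.eq_zero hkn J hJ.le b hb h1
  rw [hb0, Matrix.mulVec_zero, add_zero] at h2
  exact ⟨hG.eq_zero hkn I hI.le a ha h2, hb0⟩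

/-- The vectors of `ker G` supported on `J`. -/
def kerOn {F : Type*} [Field F] {k n : ℕ} (G : Matrix (Fin k) (Fin n) F) (J : Finset (Fin n)) :
    Submodule F (Fin n → F) where
  carrier := {b | (∀ c, c ∉ J → b c = 0) ∧ G *ᵥ b = 0}
  add_mem' := by
    rintro a b ⟨ha, ha'⟩ ⟨hb, hb'⟩
    exact ⟨fun c hc => by simp [ha c hc, hb c hc], by rw [Matrix.mulVec_add, ha', hb', add_zero]⟩
  zero_mem' := ⟨fun _ _ => rfl, Matrix.mulVec_zero _⟩
  smul_mem' := by
    rintro t a ⟨ha, ha'⟩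
    exact ⟨fun c hc => by simp [ha c hc], by rw [Matrix.mulVec_smul, ha', smul_zero]⟩

lemma finrank_kerOn_le {F : Type*} [Field F] {k n : ℕ} (hkn : k ≤ n)
    {G : Matrix (Fin k) (Fin n) F} (hG : HasMDSProperty G) (J : Finset (Fin n))
    (hJ : k ≤ J.card) : Module.finrank F (kerOn G J) ≤ J.card - k := by
  obtain ⟨T, hTJ, hT⟩ := Finset.exists_subset_card_eq hJ
  -- A vector of `kerOn G J` is determined by its coordinates in `J \ T`.
  let f : kerOn G J →ₗ[F] ((J \ T : Finset (Fin n)) → F) :=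
    (LinearMap.funLeft F F (fun c : (J \ T : Finset (Fin n)) => c.1)) ∘ₗ (kerOn G J).subtype
  have hf : Function.Injective f := by
    rw [injective_iff_map_eq_zero]
    rintro ⟨b, hb, hb'⟩ h0
    ext1
    refine hG.eq_zero hkn T hT.le b (fun c hc => ?_) hb'
    by_cases hcJ : c ∈ J
    · exact congrFun h0 ⟨c, Finset.mem_sdiff.mpr ⟨hcJ, hc⟩⟩
    · exact hb c hcJ
  refine (LinearMap.finrank_le_finrank_of_injective hf).trans ?_
  rw [Module.finrank_pi, Fintype.card_coe, Finset.card_sdiff_of_subset hTJ, hT]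

lemma exists_padRight_minor_ne_zero {F : Type*} [Field F] {k n : ℕ} (hkn : k ≤ n)
    {G0 : Matrix (Fin k) (Fin n) F} (hG : HasMDSProperty G0) (I J : Finset (Fin n))
    (hI : I.card ≤ k) (hIJ : I.card + J.card = k + k) :
    ∃ X : Matrix (Fin k) (Fin (n - k)) F,
      minorOfCols (slidingMat G0 (padRight X)) (colSet I J) ≠ 0 := by
  classical
  set W : Submodule F (Fin k → F) := Submodule.span F (I.image fun c => G0.col c : Finset _) with hW
  have hWdim : Module.finrank F W ≤ I.card :=
    (finrank_span_finset_le_card _).trans Finset.card_image_le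
  obtain ⟨W', hWW'⟩ := W.exists_isCompl
  have hsum := Submodule.finrank_add_eq_of_isCompl hWW'
  rw [Module.finrank_fin_fun] at hsum
  have hKdim := finrank_kerOn_le hkn hG J (by omega)
  obtain ⟨j, hj⟩ := (finrank_le_iff_exists_linearMap (R := F) (M := kerOn G0 J)
    (M' := W')).mp (by omega)
  -- The restriction `ρ` of vectors of `kerOn G0 J` to the first `n - k` coordinates.
  let ρ : kerOn G0 J →ₗ[F] (Fin (n - k) → F) :=
    (LinearMap.funLeft F F (Fin.castLE (Nat.sub_le n k))) ∘ₗ (kerOn G0 J).subtype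
  have hρ : LinearMap.ker ρ = ⊥ := by
    rw [LinearMap.ker_eq_bot, injective_iff_map_eq_zero]
    rintro ⟨b, hb, hb'⟩ h0
    ext1
    refine hG.eq_zero hkn ((Finset.univ.map (Fin.castLEEmb (Nat.sub_le n k)))ᶜ) ?_ b
      (fun c hc => ?_) hb'
    · rw [Finset.card_compl, Finset.card_map]
      simp
      omega
    · simp only [Finset.mem_compl, not_not, Finset.mem_map] at hc
      obtain ⟨d, -, rfl⟩ := hc
      exact congrFun h0 d
  obtain ⟨g, hg⟩ := ρ.exists_leftInverse_of_injective hρ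
  refine ⟨LinearMap.toMatrix' (W'.subtype ∘ₗ j ∘ₗ g), ?_⟩
  apply slidingMat_minor_ne_zero_of
  intro a b ha hb h1 h2
  let β : kerOn G0 J := ⟨b, hb, h1⟩
  have hX : padRight (LinearMap.toMatrix' (W'.subtype ∘ₗ j ∘ₗ g)) *ᵥ b = (j β : Fin k → F) := by
    rw [padRight_mulVec, ← Matrix.toLin'_apply, Matrix.toLin'_toMatrix']
    have : g (ρ β) = β := LinearMap.congr_fun hg β
    change ((j (g (ρ β)) : W') : Fin k → F) = _
    rw [this]
  rw [hX] at h2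
  have haW : G0 *ᵥ a ∈ W := by
    have : G0 *ᵥ a = ∑ c, a c • G0.col c := by
      ext r
      simp [Matrix.mulVec, dotProduct, mul_comm]
    rw [this]
    refine Submodule.sum_mem _ (fun c _ => ?_)
    by_cases hc : c ∈ I
    · exact Submodule.smul_mem _ _ (Submodule.subset_span
        (Finset.mem_coe.mpr (Finset.mem_image_of_mem (fun c => G0.col c) hc)))
    · simp [ha c hc]
  have h3 : (j β : Fin k → F) = 0 := by
    refine Submodule.disjoint_def.mp hWW'.disjoint _ ?_ (j β).2
    rw [← neg_eq_of_add_eq_zero_right h2]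
    exact W.neg_mem haW
  have h4 : β = 0 := hj (by rw [map_zero]; exact Subtype.ext h3)
  rw [h3, add_zero] at h2
  exact ⟨hG.eq_zero hkn I hI a ha h2, congrArg Subtype.val h4⟩

/-! ### Degrees of the minors -/

/-- If the variable `v` occurs in a single entry `(r₀, c₀)` of `M`, to degree one, then a minor has
degree at most one in `v`. If moreover column `c₁ ≠ c₀` vanishes outside row `r₀`, then `v` occurs
only in minors that use column `c₀` but not column `c₁`. -/
lemma degreeOf_minorOfCols_le {σ F : Type*} [Field F] {K N : ℕ}
    (M : Matrix (Fin K) (Fin N) (MvPolynomial σ F)) (S : Finset (Fin N)) (v : σ)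
    (r₀ : Fin K) (c₀ c₁ : Fin N) (hc : c₁ ≠ c₀)
    (hM : ∀ r c, (M r c).degreeOf v ≤ if r = r₀ ∧ c = c₀ then 1 else 0)
    (hM' : ∀ r, r ≠ r₀ → M r c₁ = 0) :
    (minorOfCols M S).degreeOf v ≤ if c₁ ∉ S ∧ c₀ ∈ S then 1 else 0 := by
  unfold minorOfCols
  split_ifs with h h' h'
  all_goals try (simp; done)
  all_goals
    rw [Matrix.det_apply]
    refine (MvPolynomial.degreeOf_sum_le _ _ _).trans (Finset.sup_le fun s _ => ?_)
    have hs : MvPolynomial.degreeOf v (Equiv.Perm.sign s •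
          ∏ i, (M.submatrix id fun i => (S.orderIsoOfFin h i).1) (s i) i)
        = MvPolynomial.degreeOf v
          (∏ i, (M.submatrix id fun i => (S.orderIsoOfFin h i).1) (s i) i) := by
      rcases Int.units_eq_one_or (Equiv.Perm.sign s) with h1 | h1 <;> rw [h1]
      · rw [one_smul]
      · rw [Units.neg_smul, one_smul, MvPolynomial.degreeOf_eq_sup, MvPolynomial.degreeOf_eq_sup,
          MvPolynomial.support_neg]
    rw [hs]
    simp only [Matrix.submatrix_apply, id]
  · refine (MvPolynomial.degreeOf_prod_le _ _ _).trans
      ((Finset.sum_le_sum fun i _ => hM _ _).trans ?_)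
    rw [← Finset.card_filter, Finset.card_le_one]
    intro a ha b hb
    simp only [Finset.mem_filter] at ha hb
    exact s.injective (ha.2.1.trans hb.2.1.symm)
  · by_cases h1 : c₁ ∈ S
    · set p := (S.orderIsoOfFin h).symm ⟨c₁, h1⟩ with hp
      have hp' : (S.orderIsoOfFin h p).1 = c₁ := by simp [hp]
      -- If `s p = r₀`, column `c₁` uses up row `r₀`; otherwise the product has a zero factor.
      by_cases hsp : s p = r₀
      · refine (MvPolynomial.degreeOf_prod_le _ _ _).trans
          ((Finset.sum_le_sum fun i _ => hM _ _).trans (le_of_eq ?_))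
        refine Finset.sum_eq_zero fun i _ => if_neg ?_
        rintro ⟨hi, hi'⟩
        have : i = p := s.injective (hi.trans hsp.symm)
        rw [this, hp'] at hi'
        exact hc hi'
      · rw [Finset.prod_eq_zero (Finset.mem_univ p) (by rw [hp']; exact hM' _ hsp)]
        simp
    · have h0 : c₀ ∉ S := fun h0 => h' ⟨h1, h0⟩
      refine (MvPolynomial.degreeOf_prod_le _ _ _).trans
        ((Finset.sum_le_sum fun i _ => hM _ _).trans (le_of_eq ?_))
      refine Finset.sum_eq_zero fun i _ => if_neg ?_
      rintro ⟨-, hi'⟩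
      exact h0 (hi' ▸ (S.orderIsoOfFin h i).2)

/-- The sliding matrix of `G₀` and `(X | 0)`, where the entries of `X` are indeterminates. -/
noncomputable def genericSliding {F : Type*} [Field F] {k n : ℕ} (G0 : Matrix (Fin k) (Fin n) F) :
    Matrix (Fin (k + k)) (Fin (n + n)) (MvPolynomial (Fin k × Fin (n - k)) F) :=
  slidingMat (G0.map MvPolynomial.C)
    (padRight (Matrix.of fun r c => MvPolynomial.X (r, c)))

lemma eval_genericSliding {F : Type*} [Field F] {k n : ℕ} (G0 : Matrix (Fin k) (Fin n) F)
    (x : Fin k × Fin (n - k) → F) :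
    (genericSliding G0).map (MvPolynomial.eval x) =
      slidingMat G0 (padRight (Matrix.of fun r c => x (r, c))) := by
  ext r c
  rw [Matrix.map_apply, genericSliding]
  refine Fin.addCases (fun r => ?_) (fun r => ?_) r <;>
    refine Fin.addCases (fun c => ?_) (fun c => ?_) c <;> simp [-Fin.natAdd_eq_addNat]
  unfold padRight
  split_ifs <;> simp

lemma degreeOf_genericMinor_le {F : Type*} [Field F] {k n : ℕ} (hkn : k ≤ n)
    (G0 : Matrix (Fin k) (Fin n) F)
    (hstd : ∀ r r' : Fin k, r' ≠ r → G0 r' (Fin.castLE hkn r) = 0)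
    (I J : Finset (Fin n)) (r : Fin k) (c : Fin (n - k)) :
    (minorOfCols (genericSliding G0) (colSet I J)).degreeOf (r, c) ≤
      if Fin.castLE hkn r ∉ I ∧ Fin.castLE (Nat.sub_le n k) c ∈ J then 1 else 0 := by
  have hne : ∀ a b : Fin n, Fin.castAdd n a ≠ Fin.natAdd n b := fun a b h => by
    have := congrArg Fin.val h
    simp at this
    omega
  have := degreeOf_minorOfCols_le (genericSliding G0) (colSet I J) (r, c) (Fin.castAdd k r)
    (Fin.natAdd n (Fin.castLE (Nat.sub_le n k) c)) (Fin.castAdd n (Fin.castLE hkn r))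
    (hne _ _) ?_ ?_
  · simpa [-Fin.natAdd_eq_addNat] using this
  · intro r' c'
    rw [genericSliding]
    refine Fin.addCases (fun r' => ?_) (fun r' => ?_) r' <;>
      refine Fin.addCases (fun c' => ?_) (fun c' => ?_) c'
    · simp [-Fin.natAdd_eq_addNat]
    · rw [slidingMat_castAdd_natAdd]
      unfold padRight
      split_ifs with h h' h'
      · rw [Matrix.of_apply, MvPolynomial.degreeOf_X]
        split_ifs <;> simp
      · rw [Matrix.of_apply, MvPolynomial.degreeOf_X, if_neg]
        rintro h0
        rw [Prod.mk.injEq] at h0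
        refine h' ⟨by rw [h0.1], ?_⟩
        rw [h0.2]
        rfl
      all_goals simp
    · simp [-Fin.natAdd_eq_addNat]
    · simp [-Fin.natAdd_eq_addNat]
  · intro r' hr'
    rw [genericSliding]
    revert hr'
    refine Fin.addCases (fun r' => ?_) (fun r' => ?_) r'
    · intro hr'
      simp [hstd r r' (fun h => hr' (by rw [h])), -Fin.natAdd_eq_addNat]
    · simp [-Fin.natAdd_eq_addNat]

/-! ### Counting the minors that involve a given variable -/

/-- The index pairs of the minors that are not block triangular. -/
def pairs (n k : ℕ) : Finset (Finset (Fin n) × Finset (Fin n)) :=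
  Finset.univ.filter fun p => p.1.card < k ∧ p.1.card + p.2.card = k + k

lemma card_pairs_le {n k : ℕ} (a b : Fin n) :
    ((pairs n k).filter fun p => a ∉ p.1 ∧ b ∈ p.2).card ≤ dPrime n k := by
  classical
  have hsub : ((pairs n k).filter fun p => a ∉ p.1 ∧ b ∈ p.2) ⊆
      (Finset.range k).biUnion fun i => (Finset.range (n + 1)).biUnion fun j =>
        if k + 1 ≤ j ∧ i + j = 2 * k then
          (Finset.powersetCard i (Finset.univ.erase a)) ×ˢ
            ((Finset.powersetCard (j - 1) (Finset.univ.erase b)).image (insert b))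
        else ∅ := by
    rintro ⟨I, J⟩ h
    simp only [pairs, Finset.mem_filter, Finset.mem_univ, true_and] at h
    obtain ⟨⟨h1, h2⟩, ha, hb⟩ := h
    have hJn : J.card ≤ n := by simpa using Finset.card_le_univ J
    simp only [Finset.mem_biUnion, Finset.mem_range]
    refine ⟨I.card, h1, J.card, by omega, ?_⟩
    rw [if_pos ⟨by omega, by omega⟩]
    simp only [Finset.mem_product, Finset.mem_powersetCard, Finset.mem_image, and_true]
    refine ⟨fun x hx => ?_, J.erase b, ⟨?_, Finset.card_erase_of_mem hb⟩,
      Finset.insert_erase hb⟩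
    · exact Finset.mem_erase.mpr ⟨fun h => ha (h ▸ hx), Finset.mem_univ _⟩
    · exact Finset.erase_subset_erase _ (Finset.subset_univ _)
  refine (Finset.card_le_card hsub).trans (Finset.card_biUnion_le.trans ?_)
  refine Finset.sum_le_sum fun i _ => Finset.card_biUnion_le.trans ?_
  refine Finset.sum_le_sum fun j _ => ?_
  split_ifs
  · rw [Finset.card_product]
    refine Nat.mul_le_mul (le_of_eq ?_) (Finset.card_image_le.trans (le_of_eq ?_)) <;>
    simp [Finset.card_powersetCard, Finset.card_erase_of_mem]
  · simp

theorem stmt7 {F : Type*} [Field F] [Fintype F] {k n : ℕ}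
    (hδ : 1 ≤ n - k) (hk : n - k < k) (hq : dPrime n k < Fintype.card F)
    (G0 : Matrix (Fin k) (Fin n) F) (hMDS : HasMDSProperty G0)
    (hstd : ∃ A : Matrix (Fin k) (Fin (n - k)) F, ∀ (r : Fin k) (c : Fin n),
      G0 r c = if h : (c : ℕ) < k then (if (r : ℕ) = (c : ℕ) then 1 else 0)
               else A r ⟨(c : ℕ) - k, by have := c.isLt; omega⟩) :
    ∃ X : Matrix (Fin k) (Fin (n - k)) F,
      NontrivialMinorsNonzero G0 (padRight X) := by
  classical
  have hkn : k ≤ n := by omega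
  obtain ⟨A, hA⟩ := hstd
  have hunit : ∀ r r' : Fin k, r' ≠ r → G0 r' (Fin.castLE hkn r) = 0 := by
    intro r r' h
    rw [hA, dif_pos (by simp), if_neg]
    intro h'
    exact h (Fin.ext (by simpa using h'))
  set P : MvPolynomial (Fin k × Fin (n - k)) F :=
    ∏ p ∈ pairs n k, minorOfCols (genericSliding G0) (colSet p.1 p.2) with hP
  have hP0 : P ≠ 0 := by
    rw [hP, Finset.prod_ne_zero_iff]
    rintro ⟨I, J⟩ hp h0
    simp only [pairs, Finset.mem_filter, Finset.mem_univ, true_and] at hp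
    obtain ⟨X, hX⟩ := exists_padRight_minor_ne_zero hkn hMDS I J hp.1.le hp.2
    apply hX
    have := congrArg (MvPolynomial.eval fun v => X v.1 v.2) h0
    rw [map_minorOfCols, eval_genericSliding, map_zero] at this
    exact this
  have hdeg : ∀ v, P.degreeOf v < (Finset.univ : Finset F).card := by
    rintro ⟨r, c⟩
    refine lt_of_le_of_lt ?_ hq
    refine (MvPolynomial.degreeOf_prod_le _ _ _).trans ?_
    refine (Finset.sum_le_sum fun p _ =>
      degreeOf_genericMinor_le hkn G0 hunit p.1 p.2 r c).trans ?_
    rw [← Finset.card_filter]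
    exact card_pairs_le _ _
  obtain ⟨x, hx⟩ : ∃ x, MvPolynomial.eval x P ≠ 0 := by
    by_contra! hall
    exact hP0 (MvPolynomial.eq_zero_of_eval_zero_at_prod_finset P (fun _ => Finset.univ) hdeg
      fun x _ => hall x)
  refine ⟨Matrix.of fun r c => x (r, c), ?_⟩
  intro I J hI hJ hIk hIJ
  obtain ⟨I', rfl⟩ : ∃ I' : Finset (Fin n), I = I'.map (Fin.castAddEmb n) := by
    refine ⟨Finset.univ.filter fun c => Fin.castAdd n c ∈ I, ?_⟩
    ext y
    simp only [Finset.mem_map, Finset.mem_filter, Finset.mem_univ, true_and]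
    constructor
    · intro hy
      exact ⟨⟨y, hI y hy⟩, hy, rfl⟩
    · rintro ⟨c, hc, rfl⟩
      exact hc
  obtain ⟨J', rfl⟩ : ∃ J' : Finset (Fin n), J = J'.map (Fin.natAddEmb n) := by
    refine ⟨Finset.univ.filter fun c => Fin.natAdd n c ∈ J, ?_⟩
    ext y
    simp only [Finset.mem_map, Finset.mem_filter, Finset.mem_univ, true_and]
    constructor
    · intro hy
      have hyn := hJ y hy
      have hy' : Fin.natAdd n ⟨(y : ℕ) - n, by omega⟩ = y := by
        ext
        simp
        omega
      exact ⟨⟨(y : ℕ) - n, by omega⟩, hy'.symm ▸ hy, hy'⟩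
    · rintro ⟨c, hc, rfl⟩
      exact hc
  rw [Finset.card_map] at hIk
  rw [Finset.card_map, Finset.card_map] at hIJ
  change minorOfCols _ (colSet I' J') ≠ 0
  rcases hIk.lt_or_eq with hlt | heq
  · rw [hP, map_prod, Finset.prod_ne_zero_iff] at hx
    have := hx (I', J') (by simp [pairs, hlt, hIJ])
    rwa [map_minorOfCols, eval_genericSliding] at this
  · exact slidingMat_minor_ne_zero_of_card_eq hkn hMDS _ I' J' heq (by omega)
end
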